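/- Classification of the mixed Virasoro–current central terms: Let V : ℤ×ℤ → ℂ and X : ℤ → ℂ satisfy, for all m, n, p ∈ ℤ: (i) (m−n)V(m+n,p) + p(V(m,n+p) − V(n,m+p)) = 0; (ii) (m−n)X(m+n) − (i/2)V(m,n) + (i/2)V(n,m) = 0; and (iii) V(0,n) = 0 for all n ≠ 0. Then there exist complex numbers d and d₀ such that V(m,n) = (d·m² − i·d₀·m(m+2))·δ_{m+n,0} for all m, n ∈ ℤ, and X(m) = d₀·δ_{m,0} for all m ∈ ℤ. -/

import Mathlib

/-- Classification of the mixed Virasoro–current central terms `V(m,n)` (in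
`i[L_m, P_n] = -n P_{m+n} + V(m,n)`) and `X(m)` (in `i[L_m, Q] = (i/2) P_m + X(m)`)
subject to the Jacobi constraints and the normalization `V 0 n = 0` for `n ≠ 0`. -/
theorem stmt_5 (V : ℤ → ℤ → ℂ) (X : ℤ → ℂ)
    (hi : ∀ m n p : ℤ,
      ((m : ℂ) - n) * V (m + n) p + (p : ℂ) * (V m (n + p) - V n (m + p)) = 0)
    (hii : ∀ m n : ℤ,
      ((m : ℂ) - n) * X (m + n) - Complex.I / 2 * V m n + Complex.I / 2 * V n m = 0)
    (hiii : ∀ n : ℤ, n ≠ 0 → V 0 n = 0) :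
    ∃ d d0 : ℂ,
      (∀ m n : ℤ, V m n = (d * (m : ℂ) ^ 2 - Complex.I * d0 * m * (m + 2))
          * (if m + n = 0 then 1 else 0)) ∧
      (∀ m : ℤ, X m = d0 * (if m = 0 then 1 else 0)) := by
  have hV : ∀ m p : ℤ, m + p ≠ 0 → V m p = 0 := by
    intro m p h
    have h1 := hi m 0 p
    simp only [add_zero, zero_add, hiii _ h, Int.cast_zero, sub_zero] at h1
    have h2 : ((m + p : ℤ) : ℂ) * V m p = 0 := by push_cast; linear_combination h1
    exact (mul_eq_zero.mp h2).resolve_left (by exact_mod_cast h)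
  have h00 : V 0 0 = 0 := by
    have h1 := hi 1 (-1) 0
    norm_num at h1
    exact h1
  have hX : ∀ m : ℤ, m ≠ 0 → X m = 0 := by
    intro m h
    have h1 := hii m 0
    rw [hiii m h, hV m 0 (by simpa using h)] at h1
    simp at h1
    exact h1.resolve_left h
  obtain ⟨a, ha⟩ : ∃ a : ℂ, a = 2 * V 1 (-1) - V 2 (-2) / 2 := ⟨_, rfl⟩
  obtain ⟨b, hb⟩ : ∃ b : ℂ, b = V 2 (-2) / 2 - V 1 (-1) := ⟨_, rfl⟩
  obtain ⟨g, hg⟩ : ∃ g : ℤ → ℂ, ∀ m : ℤ, g m = V m (-m) - a * m - b * m ^ 2 :=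
    ⟨_, fun _ => rfl⟩
  have hrec : ∀ m n : ℤ, ((m : ℂ) - n) * g (m + n) = ((m : ℂ) + n) * (g m - g n) := by
    intro m n
    have h1 := hi m n (-(m + n))
    rw [show n + -(m + n) = -m by ring, show m + -(m + n) = -n by ring] at h1
    rw [hg, hg, hg]
    push_cast at h1 ⊢
    linear_combination h1
  have g0 : g 0 = 0 := by rw [hg]; simp [h00]
  have g1 : g 1 = 0 := by rw [hg, ha, hb]; push_cast; ring
  have g2 : g 2 = 0 := by rw [hg, ha, hb]; push_cast; ring
  have gm1 : g (-1) = 0 := by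
    have h1 := hrec 2 (-1)
    norm_num [g1, g2] at h1
    exact h1
  have hpos : ∀ k : ℕ, g ((k : ℤ) + 2) = 0 := by
    intro k
    induction k with
    | zero => simpa using g2
    | succ k ih =>
      have h1 := hrec ((k : ℤ) + 2) 1
      rw [ih, g1, show (k : ℤ) + 2 + 1 = ((k + 1 : ℕ) : ℤ) + 2 by push_cast; ring] at h1
      have h2 : ((k + 1 : ℕ) : ℂ) * g (((k + 1 : ℕ) : ℤ) + 2) = 0 := by
        push_cast at h1 ⊢
        linear_combination h1
      exact (mul_eq_zero.mp h2).resolve_left (by exact_mod_cast Nat.succ_ne_zero k)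
  have hneg : ∀ k : ℕ, g (-(k : ℤ) - 1) = 0 := by
    intro k
    induction k with
    | zero => simpa using gm1
    | succ k ih =>
      have h1 := hrec (-((k + 1 : ℕ) : ℤ) - 1) 1
      rw [show -((k + 1 : ℕ) : ℤ) - 1 + 1 = -(k : ℤ) - 1 by push_cast; ring, ih, g1] at h1
      have h2 : ((k + 1 : ℕ) : ℂ) * g (-((k + 1 : ℕ) : ℤ) - 1) = 0 := by
        push_cast at h1 ⊢
        linear_combination h1
      exact (mul_eq_zero.mp h2).resolve_left (by exact_mod_cast Nat.succ_ne_zero k)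
  have hg0 : ∀ m : ℤ, g m = 0 := by
    intro m
    rcases lt_or_ge m 0 with h | h
    · have := hneg (-m - 1).toNat
      rwa [show -(((-m - 1).toNat : ℕ) : ℤ) - 1 = m by omega] at this
    · by_cases h0 : m = 0
      · rw [h0, g0]
      by_cases h1 : m = 1
      · rw [h1, g1]
      have := hpos (m - 2).toNat
      rwa [show (((m - 2).toNat : ℕ) : ℤ) + 2 = m by omega] at this
  have hf : ∀ m : ℤ, V m (-m) = a * m + b * m ^ 2 := by
    intro m
    linear_combination hg0 m - hg m
  have hX0 : a = -2 * Complex.I * X 0 := by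
    have h1 := hii 1 (-1)
    have e1 := hf 1
    have e2 := hf (-1)
    rw [neg_neg] at e2
    rw [e1, e2, show (1 : ℤ) + -1 = 0 by ring] at h1
    push_cast at h1
    linear_combination (Complex.I) * h1 + a * Complex.I_sq
  refine ⟨b + Complex.I * X 0, X 0, ?_, ?_⟩
  · intro m n
    split_ifs with h
    · obtain rfl : n = -m := by omega
      rw [hf]
      linear_combination (m : ℂ) * hX0
    · rw [hV m n h, mul_zero]
  · intro m
    split_ifs with h
    · rw [h, mul_one]
    · rw [hX m h, mul_zero]
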